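/- Let G be a parity game and let P be one of the two players. Then P's winning region in G — the set of vertices from which P has a winning strategy — is a P-dominion in G. -/

import Mathlib

/-!
Winning regions are closed under the moves of a winning strategy: if `σ` wins from `v` and `w` is a
possible next vertex, then `σ` with `v` prepended to the history wins from `w`, because dropping the
first vertex of a play does not change which priorities occur infinitely often
(`ParityGame.WinsBy.step`). This yields the two closure conditions of a dominion at once.

For the win inside the induced subgame, a winning strategy `σ` is modified to a strategy that is
never allowed to leave the winning region: wherever `σ` would leave it, any successor inside the
region is played instead (`ParityGame.confine`). Along a play that agrees with the modified
strategy, the residual of `σ` stays winning, so `σ` never actually proposes to leave the region and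
the modification is never used (`ParityGame.confine_not_used`). Hence the play agrees with `σ`, and
is won.
-/

/-- The two players of a parity game. -/
inductive Player where
  | even : Player
  | odd : Player
deriving DecidableEq

/-- The opponent of a player. -/
def Player.opp : Player → Player
  | even => odd
  | odd => even

/-- A natural number has the parity of the given player. -/
def Player.matchesPriority : Player → ℕ → Prop
  | even => fun p => Even p
  | odd => fun p => Odd p

/-- A parity game on a vertex type `V`: an ownership function, an edge relation in which
every vertex has at least one successor, and a priority function. -/
structure ParityGame (V : Type*) where
  owner : V → Player
  edge : V → V → Prop
  priority : V → ℕ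
  succ_nonempty : ∀ v, ∃ w, edge v w

namespace ParityGame

variable {V : Type*} (G : ParityGame V)

/-- A play is an infinite sequence of vertices following edges. -/
def IsPlay (π : ℕ → V) : Prop := ∀ i, G.edge (π i) (π (i + 1))

/-- Priority `p` occurs infinitely often along the play `π`. -/
def InfOften (π : ℕ → V) (p : ℕ) : Prop := ∀ N, ∃ i, N ≤ i ∧ G.priority (π i) = p

/-- A play is winning for a player if the highest priority occurring infinitely often
along it has that player's parity. -/
def WinsPlay (P : Player) (π : ℕ → V) : Prop :=
  ∃ p, G.InfOften π p ∧ (∀ q, G.InfOften π q → q ≤ p) ∧ P.matchesPriority p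

/-- A play `π` agrees with the strategy `σ` of player `P` (a strategy maps a history
together with the current vertex to the next vertex). -/
def Agrees (P : Player) (σ : List V → V → V) (π : ℕ → V) : Prop :=
  ∀ i, G.owner (π i) = P → π (i + 1) = σ (List.ofFn fun j : Fin i => π j) (π i)

/-- `σ` is a valid strategy for player `P`: at `P`'s vertices it prescribes a successor. -/
def ValidFor (P : Player) (σ : List V → V → V) : Prop :=
  ∀ hist v, G.owner v = P → G.edge v (σ hist v)

/-- Player `P` has a winning strategy from vertex `v`. -/
def WinsFrom (P : Player) (v : V) : Prop :=
  ∃ σ, G.ValidFor P σ ∧ ∀ π, π 0 = v → G.IsPlay π → G.Agrees P σ π → G.WinsPlay P π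

/-- The winning region of player `P`. -/
def winningRegion (P : Player) : Set V := {v | G.WinsFrom P v}

/-- Player `P` has a winning strategy from `v` in the subgame induced by the set `D`:
a strategy that at `P`'s vertices of `D` prescribes successors inside `D` and wins
every play that starts at `v`, stays in `D` and agrees with it. -/
def WinsWithinFrom (P : Player) (D : Set V) (v : V) : Prop :=
  ∃ σ : List V → V → V,
    (∀ hist w, w ∈ D → G.owner w = P → σ hist w ∈ D ∧ G.edge w (σ hist w)) ∧
    ∀ π, π 0 = v → G.IsPlay π → (∀ i, π i ∈ D) → G.Agrees P σ π → G.WinsPlay P π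

/-- `D` is a dominion for player `P` in the subgame of `G` induced by the vertex set `U`:
`D ⊆ U`, every `P`-vertex of `D` has a successor in `D`, every opponent vertex of `D`
has all of its successors (within the subgame) in `D`, and `P` wins from every vertex
of `D` in the subgame induced by `D`. -/
def IsDominionIn (P : Player) (U D : Set V) : Prop :=
  D ⊆ U ∧
  (∀ v ∈ D, G.owner v = P → ∃ w ∈ D, G.edge v w) ∧
  (∀ v ∈ D, G.owner v ≠ P → ∀ w ∈ U, G.edge v w → w ∈ D) ∧
  ∀ v ∈ D, G.WinsWithinFrom P D v

/-- `D` is a dominion for player `P` in `G`. -/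
def IsDominion (P : Player) (D : Set V) : Prop := G.IsDominionIn P Set.univ D

/-- The attractor for player `P` of the set `X`, computed in the subgame of `G` induced
by the vertex set `U`: the least set containing `X` such that a `P`-vertex with some
successor in it belongs to it, and an opponent vertex all of whose successors (within
the subgame) are in it belongs to it. -/
inductive AttrIn (P : Player) (U X : Set V) : V → Prop
  | base {v} : v ∈ X → AttrIn P U X v
  | player {v w} : v ∈ U → G.owner v = P → w ∈ U → G.edge v w → AttrIn P U X w →
      AttrIn P U X v
  | opponent {v} : v ∈ U → G.owner v ≠ P → (∀ w ∈ U, G.edge v w → AttrIn P U X w) →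
      AttrIn P U X v

/-- The attractor, within subgame `U`, as a set. -/
def attrIn (P : Player) (U X : Set V) : Set V := {v | G.AttrIn P U X v}

/-- The attractor `Attr_P(X, G)` for player `P` of the set `X` in the whole game `G`. -/
def attractor (P : Player) (X : Set V) : Set V := G.attrIn P Set.univ X

/-- `T` is a trap for player `P`: every `P`-vertex of `T` has all of its successors in
`T`, and every opponent vertex of `T` has at least one successor in `T`. -/
def IsTrap (P : Player) (T : Set V) : Prop :=
  (∀ v ∈ T, G.owner v = P → ∀ w, G.edge v w → w ∈ T) ∧
  (∀ v ∈ T, G.owner v ≠ P → ∃ w ∈ T, G.edge v w)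

end ParityGame

namespace ParityGame

variable {V : Type*} {G : ParityGame V} {P : Player}

/-- `σ` is a winning strategy for `P` from `v` in the whole game. -/
def WinsBy (G : ParityGame V) (P : Player) (σ : List V → V → V) (v : V) : Prop :=
  G.ValidFor P σ ∧ ∀ π, π 0 = v → G.IsPlay π → G.Agrees P σ π → G.WinsPlay P π

theorem infOften_succ (π : ℕ → V) (p : ℕ) :
    G.InfOften (fun n => π (n + 1)) p ↔ G.InfOften π p := by
  constructor
  · intro h N
    obtain ⟨i, hi, hp⟩ := h N
    exact ⟨i + 1, by omega, hp⟩
  · intro h N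
    obtain ⟨i, hi, hp⟩ := h (N + 1)
    obtain ⟨j, rfl⟩ : ∃ j, i = j + 1 := ⟨i - 1, by omega⟩
    exact ⟨j, by omega, hp⟩

theorem winsPlay_succ (π : ℕ → V) :
    G.WinsPlay P (fun n => π (n + 1)) ↔ G.WinsPlay P π := by
  simp only [WinsPlay, infOften_succ]

theorem agrees_succ {σ : List V → V → V} {π : ℕ → V} :
    G.Agrees P σ π ↔ (G.owner (π 0) = P → π 1 = σ [] (π 0)) ∧
      G.Agrees P (fun h => σ (π 0 :: h)) (fun n => π (n + 1)) := by
  constructor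
  · intro h
    refine ⟨fun h0 => by simpa using h 0 h0, fun i hi => ?_⟩
    simpa [List.ofFn_succ] using h (i + 1) hi
  · rintro ⟨h0, h1⟩ (_ | i) hi
    · simpa using h0 hi
    · simpa [List.ofFn_succ] using h1 i hi

/-- The residual of a winning strategy after one move consistent with it is winning. -/
theorem WinsBy.step {σ : List V → V → V} {v w : V} (hσ : G.WinsBy P σ v) (hvw : G.edge v w)
    (hw : G.owner v = P → w = σ [] v) : G.WinsBy P (fun h => σ (v :: h)) w := by
  refine ⟨fun h u hu => hσ.1 _ u hu, fun π h0 hπ hag => ?_⟩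
  -- The play `v, π 0, π 1, …` agrees with `σ`.
  let ρ : ℕ → V := fun n => Nat.casesOn n v π
  have hρ : G.WinsPlay P ρ := by
    refine hσ.2 ρ rfl ?_ (agrees_succ.2 ⟨fun h => h0.trans (hw h), hag⟩)
    rintro (_ | i)
    · change G.edge v (π 0)
      rwa [h0]
    · exact hπ i
  exact (winsPlay_succ ρ).2 hρ

theorem WinsBy.mem {σ : List V → V → V} {v : V} (hσ : G.WinsBy P σ v) :
    v ∈ G.winningRegion P := ⟨σ, hσ⟩

open Classical in
/-- The strategy that follows `σ` as long as it moves into `W`, and otherwise falls back to the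
positional choice `f`. -/
noncomputable def confine (W : Set V) (f : V → V) (σ : List V → V → V) : List V → V → V :=
  fun h v => if σ h v ∈ W then σ h v else f v

/-- Along a play from a vertex where `σ` wins that agrees with the confinement of `σ` to the
winning region, `σ` itself always stays in the winning region. -/
theorem confine_not_used (f : V → V) (i : ℕ) : ∀ (σ : List V → V → V) (π : ℕ → V),
    G.WinsBy P σ (π 0) → G.IsPlay π → G.Agrees P (confine (G.winningRegion P) f σ) π →
    G.owner (π i) = P →
    σ (List.ofFn fun j : Fin i => π j) (π i) ∈ G.winningRegion P := by
  induction i with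
  | zero =>
    intro σ π hσ _ _ hi
    simpa using (hσ.step (hσ.1 [] _ hi) (fun _ => rfl)).mem
  | succ i ih =>
    intro σ π hσ hπ hag hi
    obtain ⟨h0, h1⟩ := agrees_succ.1 hag
    have hw : G.owner (π 0) = P → π 1 = σ [] (π 0) := fun ho => by
      rw [h0 ho, confine, if_pos (hσ.step (hσ.1 [] _ ho) (fun _ => rfl)).mem]
    have := ih (fun h => σ (π 0 :: h)) (fun n => π (n + 1)) (hσ.step (hπ 0) hw)
      (fun n => hπ (n + 1)) h1 hi
    simpa [List.ofFn_succ] using this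

end ParityGame

/-- A player's winning region is a dominion for that player. -/
theorem winningRegion_isDominion {V : Type*} [Finite V] (G : ParityGame V) (P : Player) :
    G.IsDominion P (G.winningRegion P) := by
  have hsucc : ∀ v ∈ G.winningRegion P, G.owner v = P →
      ∃ w ∈ G.winningRegion P, G.edge v w := by
    rintro v ⟨σ, hσ⟩ ho
    have hσ' : G.WinsBy P σ v := hσ
    exact ⟨σ [] v, (hσ'.step (hσ'.1 [] v ho) (fun _ => rfl)).mem, hσ'.1 [] v ho⟩
  refine ⟨Set.subset_univ _, hsucc, ?_, ?_⟩
  · rintro v ⟨σ, hσ⟩ ho w - hvw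
    have hσ' : G.WinsBy P σ v := hσ
    exact (hσ'.step hvw (fun h => absurd h ho)).mem
  · rintro v ⟨σ, hσ⟩
    have hf : ∀ w, ∃ u, w ∈ G.winningRegion P → G.owner w = P →
        u ∈ G.winningRegion P ∧ G.edge w u := by
      intro w
      by_cases h : w ∈ G.winningRegion P ∧ G.owner w = P
      · obtain ⟨u, hu⟩ := hsucc w h.1 h.2
        exact ⟨u, fun _ _ => hu⟩
      · exact ⟨w, fun h1 h2 => absurd ⟨h1, h2⟩ h⟩
    choose f hf using hf
    refine ⟨ParityGame.confine (G.winningRegion P) f σ, fun h w hw ho => ?_,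
      fun π h0 hπ _ hag => hσ.2 π h0 hπ fun i hi => ?_⟩
    · unfold ParityGame.confine
      split_ifs with hm
      · exact ⟨hm, hσ.1 h w ho⟩
      · exact hf w hw ho
    · have hσ' : G.WinsBy P σ (π 0) := h0 ▸ hσ
      rw [hag i hi, ParityGame.confine,
        if_pos (ParityGame.confine_not_used f i σ π hσ' hπ hag hi)]
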